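/- Let N be a positive integer, 1 ≤ p < ∞ with 1/p + 1/q = 1, and let u : 𝕋 → ℝ be continuous, nonnegative, even, not identically zero, supported in [−π/(2N), π/(2N)], with ‖u‖_{L^q(𝕋)} = 1. Let x_1 < x_2 < … < x_r (r > 1) be points in 𝕋 with separation δ > 0. Then for every trigonometric polynomial s of degree at most N, ∑_{j=1}^r |s(x_j)|^p ≤ (σ(δ;N) / (û(N))^p) · ∫_𝕋 |s(x)|^p dx. -/

import Mathlib

/-!
The proof bounds `s` pointwise by rotated local averages of itself and then counts how often the
averaging windows overlap.

For integers `|k| ≤ N` and `t` in the support of `u` one has `|kt| ≤ π/2`, so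
`û(k) = ∫ cos(kt) u(t) dt` is positive and has nonpositive second differences (`cosT_pos`,
`cosT_add_le`). Hence `1/û` is even, positive and convex on the integers of `[-N, N]`. Extend it
`2N`-periodically and expand it in characters of `ℤ/2N`. Convexity makes the coefficients, up to the
alternating sign `(-1)^m`, nonnegative (`re_sum_nonneg`), so the sum of their absolute values is the
value of the function at `N`, which is `1/û(N)` (`exists_interpolation`). Translated back to `s`,
this gives weights `w_m` and angles `θ_m` with `∑ |w_m| = 1/û(N)` and
`s(y) = ∑_m w_m ∫ s(y + θ_m + t) u(t) dt` (`exists_representation`).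

Jensen's inequality in `m` and Hölder's inequality in `t`, with `‖u‖_q = 1`, bound `|s(x_j)|^p` by
`û(N)^{-p}` times a weighted mean over `m` of the integrals of `|s|^p` over the windows of length
`π/N` centred at `x_j + θ_m`. For a fixed `m` the angle `θ_m` is the same for all `j`, so the windows
cover each point of the circle at most `⌈π/(Nδ)⌉ = σ(δ;N)` times (`card_window_le`), and the sum over
`j` is at most `σ(δ;N) ∫ |s|^p` (`sum_integral_window_le`).
-/

open Real MeasureTheory Set ENNReal

-- σ(δ;N): equals π/(Nδ) if that quantity is an integer, and 1 + ⌊π/(Nδ)⌋ otherwise.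
open Classical in
noncomputable def sigmaDN (δ : ℝ) (N : ℕ) : ℝ :=
  if ∃ z : ℤ, π / (N * δ) = (z : ℝ) then π / (N * δ) else 1 + ⌊π / (N * δ)⌋

-- Fourier transform on 𝕋 = (-π, π]: û(x) = ∫_𝕋 e^{-ixt} u(t) dt.
noncomputable def fourierT (u : ℝ → ℝ) (x : ℝ) : ℂ :=
  ∫ t in Set.Ioc (-π) π, Complex.exp (-(Complex.I) * (x : ℂ) * (t : ℂ)) * (u t : ℂ)

/-! ### The Fourier transform of `u` on `[-N, N]` -/

/-- The cosine transform `∫_{-π}^{π} cos(xt) u(t) dt`, which is `û(x)` for even `u`. -/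
noncomputable def cosT (u : ℝ → ℝ) (x : ℝ) : ℝ := ∫ t in (-π)..π, Real.cos (x * t) * u t

lemma integral_exp_mul_eq (u : ℝ → ℝ) (hc : Continuous u) (he : ∀ t, u (-t) = u t) (x : ℝ) :
    ∫ t in (-π)..π, Complex.exp (Complex.I * (x : ℂ) * (t : ℂ)) * (u t : ℂ) = (cosT u x : ℂ) := by
  have hflip : ∫ t in (-π)..π, Complex.exp (Complex.I * (x : ℂ) * (t : ℂ)) * (u t : ℂ) =
      ∫ t in (-π)..π, Complex.exp (-(Complex.I * (x : ℂ) * (t : ℂ))) * (u t : ℂ) := by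
    have := intervalIntegral.integral_comp_neg (a := -π) (b := π)
      (fun t : ℝ => Complex.exp (Complex.I * (x : ℂ) * (t : ℂ)) * (u t : ℂ))
    simp only [neg_neg] at this
    rw [← this]
    refine intervalIntegral.integral_congr fun t _ => ?_
    simp [he]
  have hsum : (∫ t in (-π)..π, Complex.exp (Complex.I * (x : ℂ) * (t : ℂ)) * (u t : ℂ)) +
      ∫ t in (-π)..π, Complex.exp (-(Complex.I * (x : ℂ) * (t : ℂ))) * (u t : ℂ) =
      2 * (cosT u x : ℂ) := by
    rw [← intervalIntegral.integral_add (Continuous.intervalIntegrable (by fun_prop) _ _)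
      (Continuous.intervalIntegrable (by fun_prop) _ _), cosT, ← intervalIntegral.integral_ofReal,
      ← intervalIntegral.integral_const_mul]
    refine intervalIntegral.integral_congr fun t _ => ?_
    simp only [Complex.ofReal_mul, Complex.ofReal_cos]
    rw [← mul_assoc, Complex.two_cos]
    rw [show (x : ℂ) * t * Complex.I = Complex.I * x * t by ring,
      show -((x : ℂ) * t) * Complex.I = -(Complex.I * x * t) by ring]
    ring
  rw [← hflip] at hsum
  linear_combination hsum / 2

lemma cosT_neg (u : ℝ → ℝ) (x : ℝ) : cosT u (-x) = cosT u x := by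
  simp [cosT, neg_mul]

lemma fourierT_eq (u : ℝ → ℝ) (hc : Continuous u) (he : ∀ t, u (-t) = u t) (x : ℝ) :
    fourierT u x = (cosT u x : ℂ) := by
  rw [← cosT_neg, ← integral_exp_mul_eq u hc he,
    intervalIntegral.integral_of_le (by linarith [Real.pi_pos]), fourierT]
  simp

/-- The support of a continuous function is open, so the end points can be dropped. -/
lemma support_subset_Ioo {u : ℝ → ℝ} (hc : Continuous u) {L : ℝ}
    (hs : Function.support u ⊆ Icc (-L) L) : Function.support u ⊆ Ioo (-L) L := by
  have := interior_maximal hs hc.isOpen_support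
  rwa [interior_Icc] at this

/-- For `|x| ≤ N` the product `xt` stays in the range where the cosine is positive, for all `t` in
the interior of the support window of `u`. -/
lemma abs_mul_lt {N : ℕ} (hN : 0 < N) {x t : ℝ} (hx : |x| ≤ N)
    (ht : t ∈ Ioo (-(π / (2 * N))) (π / (2 * N))) : |x * t| < π / 2 := by
  have hN' : (0 : ℝ) < N := by exact_mod_cast hN
  have ht' : |t| < π / (2 * N) := abs_lt.2 ht
  rw [abs_mul]
  calc |x| * |t| ≤ N * |t| := by gcongr
    _ < N * (π / (2 * N)) := by gcongr
    _ = π / 2 := by field_simp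

lemma cosT_pos {N : ℕ} (hN : 0 < N) {u : ℝ → ℝ}
    (hc : Continuous u) (hnn : ∀ t, 0 ≤ u t) (hne : u ≠ 0)
    (hs : Function.support u ⊆ Ioo (-(π / (2 * N))) (π / (2 * N))) {x : ℝ} (hx : |x| ≤ N) :
    0 < cosT u x := by
  have hpi := Real.pi_pos
  have hcos : ∀ t, u t ≠ 0 → 0 < Real.cos (x * t) := fun t ht =>
    Real.cos_pos_of_mem_Ioo (abs_lt.1 (abs_mul_lt hN hx (hs ht)))
  obtain ⟨t₀, ht₀⟩ := Function.ne_iff.1 hne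
  have hN1 : (1 : ℝ) ≤ N := by exact_mod_cast hN
  have hL : π / (2 * N) ≤ π := div_le_self hpi.le (by linarith)
  have hmem := hs (show t₀ ∈ Function.support u from ht₀)
  refine intervalIntegral.integral_pos (by linarith) (by fun_prop) (fun t _ => ?_)
    ⟨t₀, ⟨by linarith [hmem.1], by linarith [hmem.2]⟩,
      mul_pos (hcos _ ht₀) ((hnn _).lt_of_ne' ht₀)⟩
  by_cases h : u t = 0
  · simp [h]
  · exact mul_nonneg (hcos t h).le (hnn t)

/-- Concavity of `û` on `[-N, N]`, as a second-difference inequality: it comes from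
`cos((x+1)t) + cos((x-1)t) = 2 cos(xt) cos t ≤ 2 cos(xt)` when `cos(xt) ≥ 0`. -/
lemma cosT_add_le {N : ℕ} (hN : 0 < N) {u : ℝ → ℝ}
    (hc : Continuous u) (hnn : ∀ t, 0 ≤ u t)
    (hs : Function.support u ⊆ Ioo (-(π / (2 * N))) (π / (2 * N))) {x : ℝ} (hx : |x| ≤ N) :
    cosT u (x + 1) + cosT u (x - 1) ≤ 2 * cosT u x := by
  have hpi := Real.pi_pos
  unfold cosT
  rw [← intervalIntegral.integral_add (Continuous.intervalIntegrable (by fun_prop) _ _)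
      (Continuous.intervalIntegrable (by fun_prop) _ _), ← intervalIntegral.integral_const_mul]
  refine intervalIntegral.integral_mono_on (by linarith)
    (Continuous.intervalIntegrable (by fun_prop) _ _)
    (Continuous.intervalIntegrable (by fun_prop) _ _) fun t _ => ?_
  by_cases h : u t = 0
  · simp [h]
  have hcos : 0 < Real.cos (x * t) :=
    Real.cos_pos_of_mem_Ioo (abs_lt.1 (abs_mul_lt hN hx (hs h)))
  rw [add_mul, sub_mul, Real.cos_add, Real.cos_sub]
  nlinarith [mul_nonneg hcos.le (hnn t), Real.cos_le_one (1 * t)]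

/-! ### Positive weights from discrete convexity -/

/-- A positive function on `ZMod M` that is convex away from `0` has nonnegative cosine sums.
Summation by parts moves the second difference of `Ψ` onto `1 - cos`, which vanishes at `0`, the
only place where the second difference of `Ψ` may be negative. -/
lemma re_sum_nonneg {M : ℕ} [NeZero M] (Ψ : ZMod M → ℝ)
    (hpos : ∀ j, 0 < Ψ j) (hconv : ∀ j, j ≠ 0 → 2 * Ψ j ≤ Ψ (j + 1) + Ψ (j - 1)) (m : ZMod M) :
    0 ≤ ∑ j, Ψ j * (ZMod.stdAddChar (j * m)).re := by
  rcases eq_or_ne m 0 with rfl | hm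
  · simpa using Finset.sum_nonneg fun j _ => (hpos j).le
  set g : ZMod M → ℝ := fun j => (ZMod.stdAddChar (j * m)).re with hg
  have hle : ∀ j, (ZMod.stdAddChar (N := M) j).re ≤ 1 := fun j =>
    (Complex.re_le_norm _).trans (by simp)
  have hlt : g 1 < 1 := by
    refine lt_of_le_of_ne (hle _) fun h => hm ?_
    apply ZMod.injective_stdAddChar
    simp only [hg, one_mul] at h
    have hn : ‖ZMod.stdAddChar m‖ = 1 := by simp
    rw [AddChar.map_zero_eq_one]
    have := Complex.sq_norm (ZMod.stdAddChar m)
    rw [hn, Complex.normSq_apply, h] at this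
    apply Complex.ext
    · simpa using h
    · simpa using (by nlinarith : (ZMod.stdAddChar m).im * (ZMod.stdAddChar m).im = 0)
  -- `g` is an eigenfunction of the second difference operator
  have heig : ∀ j, g (j + 1) + g (j - 1) = 2 * g 1 * g j := by
    intro j
    have h1 : ZMod.stdAddChar ((j + 1) * m) = ZMod.stdAddChar (j * m) * ZMod.stdAddChar m := by
      rw [add_mul, one_mul, AddChar.map_add_eq_mul]
    have h2 : ZMod.stdAddChar ((j - 1) * m) =
        ZMod.stdAddChar (j * m) * (starRingEnd ℂ) (ZMod.stdAddChar m) := by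
      rw [sub_mul, one_mul, sub_eq_add_neg, AddChar.map_add_eq_mul, AddChar.map_neg_eq_conj]
    simp only [hg, h1, h2, one_mul, Complex.mul_re, Complex.conj_re, Complex.conj_im]
    ring
  have hD : 0 ≤ ∑ j, (Ψ (j + 1) + Ψ (j - 1) - 2 * Ψ j) * (1 - g j) := by
    refine Finset.sum_nonneg fun j _ => ?_
    rcases eq_or_ne j 0 with rfl | hj
    · simp [hg]
    · exact mul_nonneg (by linarith [hconv j hj]) (by linarith [hle (j * m)])
  have e1 : ∑ j, Ψ (j + 1) * (1 - g j) = ∑ j, Ψ j * (1 - g (j - 1)) := by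
    rw [← Equiv.sum_comp (Equiv.addRight (1 : ZMod M)) fun j => Ψ j * (1 - g (j - 1))]
    simp
  have e2 : ∑ j, Ψ (j - 1) * (1 - g j) = ∑ j, Ψ j * (1 - g (j + 1)) := by
    rw [← Equiv.sum_comp (Equiv.subRight (1 : ZMod M)) fun j => Ψ j * (1 - g (j + 1))]
    simp
  have key : ∑ j, (Ψ (j + 1) + Ψ (j - 1) - 2 * Ψ j) * (1 - g j) =
      (2 - 2 * g 1) * ∑ j, Ψ j * g j := by
    simp only [sub_mul, add_mul, Finset.sum_sub_distrib, Finset.sum_add_distrib, e1, e2]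
    rw [← Finset.sum_add_distrib, ← Finset.sum_sub_distrib, ← sub_mul, Finset.mul_sum]
    refine Finset.sum_congr rfl fun j _ => ?_
    linear_combination (-Ψ j) * heig j
  rw [key] at hD
  exact nonneg_of_mul_nonneg_right hD (by linarith)

lemma dft_inversion {M : ℕ} [NeZero M] (Φ : ZMod M → ℂ) (k : ZMod M) :
    ∑ m, ((M : ℂ)⁻¹ * ∑ j, Φ j * ZMod.stdAddChar (-(j * m))) * ZMod.stdAddChar (m * k) = Φ k := by
  have hM : (M : ℂ) ≠ 0 := by exact_mod_cast NeZero.ne M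
  have h : ∀ j : ZMod M, ∑ m, ZMod.stdAddChar (m * (k - j)) = if j = k then (M : ℂ) else 0 := by
    intro j
    rw [AddChar.sum_mulShift _ (ZMod.isPrimitive_stdAddChar M)]
    simp [sub_eq_zero, eq_comm, ZMod.card]
  calc _ = (M : ℂ)⁻¹ * ∑ j, Φ j * ∑ m, ZMod.stdAddChar (m * (k - j)) := by
        simp only [Finset.mul_sum, Finset.sum_mul]
        rw [Finset.sum_comm]
        refine Finset.sum_congr rfl fun j _ => Finset.sum_congr rfl fun m _ => ?_
        rw [show m * (k - j) = -(j * m) + m * k by ring, AddChar.map_add_eq_mul]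
        ring
    _ = Φ k := by simp [h]; field_simp

/-- An even (about `a`), positive function `Φ` on `ZMod M`, convex away from `a`, is a combination
of characters with coefficients of total mass exactly `Φ a`. The coefficients are those of the
discrete Fourier transform: up to a phase they are the cosine sums of `Φ (a + ·)`, which are
nonnegative, so the sum of their absolute values is the inversion formula at `a`. -/
lemma exists_weights {M : ℕ} [NeZero M] (Φ : ZMod M → ℝ) (a : ZMod M)
    (hpos : ∀ j, 0 < Φ j) (heven : ∀ j, Φ (a - j) = Φ (a + j))
    (hconv : ∀ j, j ≠ a → 2 * Φ j ≤ Φ (j + 1) + Φ (j - 1)) :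
    ∃ w : ZMod M → ℂ, ∑ m, ‖w m‖ = Φ a ∧
      ∀ k, ∑ m, w m * ZMod.stdAddChar (m * k) = Φ k := by
  set S : ZMod M → ℝ := fun m => ∑ j, Φ (a + j) * (ZMod.stdAddChar (j * m)).re with hS
  have hS0 : ∀ m, 0 ≤ S m := re_sum_nonneg (fun j => Φ (a + j)) (fun j => hpos _) (fun j hj => by
    have := hconv (a + j) (by simpa using hj)
    simpa [add_assoc, add_sub_assoc] using this)
  have hSc : ∀ m, (S m : ℂ) = ∑ j, (Φ (a + j) : ℂ) * ZMod.stdAddChar (-(j * m)) := by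
    intro m
    have him : ∑ j, Φ (a + j) * (ZMod.stdAddChar (j * m)).im = 0 := by
      have : ∑ j, Φ (a + j) * (ZMod.stdAddChar (j * m)).im =
          -∑ j, Φ (a + j) * (ZMod.stdAddChar (j * m)).im := by
        conv_lhs => rw [← Equiv.sum_comp (Equiv.neg (ZMod M))]
        rw [← Finset.sum_neg_distrib]
        refine Finset.sum_congr rfl fun j _ => ?_
        simp only [Equiv.neg_apply, neg_mul, AddChar.map_neg_eq_conj, Complex.conj_im,
          ← sub_eq_add_neg, heven]
        ring
      linarith
    apply Complex.ext
    · simp [hS, AddChar.map_neg_eq_conj]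
    · simp [AddChar.map_neg_eq_conj, him]
  refine ⟨fun m => (M : ℂ)⁻¹ * ∑ j, (Φ j : ℂ) * ZMod.stdAddChar (-(j * m)), ?_,
    fun k => dft_inversion (fun j => (Φ j : ℂ)) k⟩
  have hnorm : ∀ m, ‖(M : ℂ)⁻¹ * ∑ j, (Φ j : ℂ) * ZMod.stdAddChar (-(j * m))‖ =
      (M : ℝ)⁻¹ * S m := by
    intro m
    have : ∑ j, (Φ j : ℂ) * ZMod.stdAddChar (-(j * m)) =
        ZMod.stdAddChar (-(a * m)) * (S m : ℂ) := by
      rw [hSc, ← Equiv.sum_comp (Equiv.addLeft a), Finset.mul_sum]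
      refine Finset.sum_congr rfl fun j _ => ?_
      rw [Equiv.coe_addLeft, show -((a + j) * m) = -(a * m) + -(j * m) by ring,
        AddChar.map_add_eq_mul]
      ring
    rw [this, norm_mul, norm_mul, Complex.norm_real, Real.norm_of_nonneg (hS0 m)]
    simp
  simp only [hnorm]
  have := dft_inversion (fun j => (Φ (a + j) : ℂ)) 0
  simp only [← hSc, mul_zero, AddChar.map_zero_eq_one, mul_one, add_zero] at this
  have h2 : ((∑ m, (M : ℝ)⁻¹ * S m : ℝ) : ℂ) = (Φ a : ℂ) := by
    push_cast
    exact this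
  exact_mod_cast h2

/-- An even, positive, convex function on the integers of `[-N, N]` agrees there with the
Fourier transform of a finite discrete measure of total variation `φ N`. The measure sits at the
`2N`-th roots of unity: `φ` is extended `2N`-periodically, which is consistent at `±N` by evenness,
and its convexity fails only at the residue of `N`. -/
lemma exists_interpolation {N : ℕ} (hN : 0 < N) (φ : ℤ → ℝ) (heven : ∀ k, φ (-k) = φ k)
    (hpos : ∀ k : ℤ, |k| ≤ N → 0 < φ k)
    (hconv : ∀ k : ℤ, |k| < N → 2 * φ k ≤ φ (k + 1) + φ (k - 1)) :
    ∃ (ι : Type) (_ : Fintype ι) (w : ι → ℂ) (θ : ι → ℝ), ∑ m, ‖w m‖ = φ N ∧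
      ∀ k : ℤ, |k| ≤ N → ∑ m, w m * Complex.exp (Complex.I * k * θ m) = φ k := by
  have : NeZero (2 * N) := ⟨by omega⟩
  set Φ : ZMod (2 * N) → ℝ := fun j => φ j.valMinAbs with hΦ
  have hval : ∀ k : ℤ, |k| ≤ N → Φ k = φ k := by
    intro k hk
    rw [abs_le] at hk
    rcases hk.1.eq_or_lt with h | h
    · have : ((k : ℤ) : ZMod (2 * N)).valMinAbs = N := by
        rw [ZMod.valMinAbs_spec]
        refine ⟨?_, by push_cast; constructor <;> omega⟩
        rw [← sub_eq_zero, ← Int.cast_sub, ZMod.intCast_zmod_eq_zero_iff_dvd]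
        exact ⟨-1, by push_cast; omega⟩
      simp only [hΦ, this]
      rw [← h, heven]
    · have : ((k : ℤ) : ZMod (2 * N)).valMinAbs = k := by
        rw [ZMod.valMinAbs_spec]
        exact ⟨rfl, by push_cast; constructor <;> omega⟩
      simp only [hΦ, this]
  have hrep : ∀ j : ZMod (2 * N), ∃ k : ℤ, |k| ≤ N ∧ j = k := fun j =>
    ⟨j.valMinAbs, by
      have := j.valMinAbs_mem_Ioc
      push_cast at this
      rw [abs_le]; constructor <;> linarith [this.1, this.2], j.coe_valMinAbs.symm⟩
  have hΦneg : ∀ j, Φ (-j) = Φ j := by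
    intro j
    obtain ⟨k, hk, rfl⟩ := hrep j
    rw [← Int.cast_neg, hval _ (by rwa [abs_neg]), hval _ hk, heven]
  have h2N : ((N : ℤ) : ZMod (2 * N)) + ((N : ℤ) : ZMod (2 * N)) = 0 := by
    rw [← Int.cast_add, ZMod.intCast_zmod_eq_zero_iff_dvd]
    exact ⟨1, by push_cast; ring⟩
  obtain ⟨w, hw1, hw2⟩ := exists_weights Φ ((N : ℤ) : ZMod (2 * N))
    (fun j => by
      obtain ⟨k, hk, rfl⟩ := hrep j
      rw [hval k hk]; exact hpos k hk)
    (fun j => by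
      rw [← hΦneg]
      congr 1
      linear_combination -h2N)
    (fun j hj => by
      obtain ⟨k, hk, rfl⟩ := hrep j
      have hk' : |k| < N := by
        rw [abs_le] at hk
        rw [abs_lt]
        refine ⟨hk.1.lt_of_ne fun h => hj ?_, hk.2.lt_of_ne fun h => hj (by rw [h])⟩
        rw [← h, Int.cast_neg]
        linear_combination -h2N
      have hk2 := abs_lt.1 hk'
      have h1 := hval (k + 1) (abs_le.2 ⟨by omega, by omega⟩)
      have h2 := hval (k - 1) (abs_le.2 ⟨by omega, by omega⟩)
      push_cast at h1 h2
      rw [hval k hk, h1, h2]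
      exact hconv k hk')
  refine ⟨ZMod (2 * N), inferInstance, w, fun m => 2 * π * m.val / (2 * N), ?_, fun k hk => ?_⟩
  · rw [hw1, hval _ (by simp)]
  · rw [← hval k hk, ← hw2]
    refine Finset.sum_congr rfl fun m _ => ?_
    congr 1
    have : m * (k : ZMod (2 * N)) = ((m.val * k : ℤ) : ZMod (2 * N)) := by simp
    rw [this, ZMod.stdAddChar_coe]
    congr 1
    push_cast
    ring

/-! ### Hölder's inequality on the support of `u` -/

/-- Hölder's inequality against `u`, localized to the support window of `u`. The case `p = 1`,
`q = ∞` is included. -/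
lemma norm_integral_mul_rpow_le {p : ℝ} (hp : 1 ≤ p) {q : ℝ≥0∞}
    (hpq : (ENNReal.ofReal p)⁻¹ + q⁻¹ = 1) {u : ℝ → ℝ} (hc : Continuous u) {L : ℝ}
    (hL : 0 ≤ L) (hLπ : L ≤ π) (hs : Function.support u ⊆ Ioo (-L) L)
    (hu_norm : eLpNorm (fun t => u t) q (volume.restrict (Ioc (-π) π)) = 1)
    {f : ℝ → ℂ} (hf : Continuous f) :
    ‖∫ t in (-π)..π, f t * (u t : ℂ)‖ ^ p ≤ ∫ t in (-L)..L, ‖f t‖ ^ p := by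
  have hp0 : 0 < p := by linarith
  have hp1 : ENNReal.ofReal p ≠ 0 := by simpa using hp0
  have hsub : Ioc (-L) L ⊆ Ioc (-π) π := Ioc_subset_Ioc (by linarith) hLπ
  have : ENNReal.HolderTriple q (ENNReal.ofReal p) 1 := ⟨by rw [add_comm, hpq, inv_one]⟩
  set μ := volume.restrict (Ioc (-L) L) with hμ
  have hmem : MemLp f (ENNReal.ofReal p) μ := by
    obtain ⟨C, hC⟩ := isCompact_Icc.exists_bound_of_continuousOn
      (hf.continuousOn (s := Icc (-L) L))
    refine MemLp.of_bound hf.aestronglyMeasurable C ?_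
    filter_upwards [ae_restrict_mem measurableSet_Ioc] with t ht
    exact hC t (Ioc_subset_Icc_self ht)
  have hint : ∫ t in (-π)..π, f t * (u t : ℂ) = ∫ t, u t • f t ∂μ := by
    rw [intervalIntegral.integral_of_le (by linarith)]
    rw [setIntegral_eq_of_subset_of_forall_sdiff_eq_zero measurableSet_Ioc hsub]
    · refine integral_congr_ae (.of_forall fun t => ?_)
      simp [mul_comm]
    · intro t ht
      have : u t = 0 := by
        by_contra h
        exact ht.2 (Ioo_subset_Ioc_self (hs h))
      simp [this]
  have hu1 : eLpNorm u q μ ≤ 1 := by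
    rw [← hu_norm]
    exact eLpNorm_mono_measure _ (Measure.restrict_mono hsub le_rfl)
  have hnn : 0 ≤ ∫ t, ‖f t‖ ^ p ∂μ := integral_nonneg fun t => by positivity
  have hH : ‖∫ t, u t • f t ∂μ‖ₑ ≤ ENNReal.ofReal ((∫ t, ‖f t‖ ^ p ∂μ) ^ p⁻¹) := by
    calc _ ≤ ∫⁻ t, ‖u t • f t‖ₑ ∂μ := enorm_integral_le_lintegral_enorm _
      _ = eLpNorm (u • f) 1 μ := by rw [eLpNorm_one_eq_lintegral_enorm]; rfl
      _ ≤ eLpNorm u q μ * eLpNorm f (ENNReal.ofReal p) μ :=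
        eLpNorm_smul_le_mul_eLpNorm hf.aestronglyMeasurable hc.aestronglyMeasurable
      _ ≤ eLpNorm f (ENNReal.ofReal p) μ := mul_le_of_le_one_left' hu1
      _ = _ := by
        rw [hmem.eLpNorm_eq_integral_rpow_norm hp1 ENNReal.ofReal_ne_top,
          ENNReal.toReal_ofReal hp0.le]
  rw [← ofReal_norm, ENNReal.ofReal_le_ofReal_iff (by positivity)] at hH
  rw [hint, intervalIntegral.integral_of_le (by linarith)]
  calc _ ≤ ((∫ t, ‖f t‖ ^ p ∂μ) ^ p⁻¹) ^ p := by gcongr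
    _ = _ := Real.rpow_inv_rpow hnn hp0.ne'

/-! ### Overlap of the windows around the nodes -/

/-- The periodization `⋃ₙ ((-L, L] + 2πn)` of the window `(-L, L]`. -/
def perIoc (L : ℝ) : Set ℝ := {y | ∃ n : ℤ, y + n * (2 * π) ∈ Ioc (-L) L}

lemma measurableSet_perIoc (L : ℝ) : MeasurableSet (perIoc L) := by
  have : perIoc L = ⋃ n : ℤ, (fun y : ℝ => y + n * (2 * π)) ⁻¹' Ioc (-L) L := by
    ext y
    simp only [perIoc, mem_iUnion, mem_preimage]
    rfl
  rw [this]
  exact MeasurableSet.iUnion fun n => measurableSet_Ioc.preimage (by fun_prop)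

lemma add_two_pi_mem_perIoc {L y : ℝ} : y + 2 * π ∈ perIoc L ↔ y ∈ perIoc L := by
  constructor
  · rintro ⟨n, hn⟩
    refine ⟨n + 1, ?_⟩
    convert hn using 1
    push_cast; ring
  · rintro ⟨n, hn⟩
    refine ⟨n - 1, ?_⟩
    convert hn using 1
    push_cast; ring

lemma mem_perIoc_iff {L y : ℝ} (hL : L < π) (hy : y ∈ Ioc (-π) π) :
    y ∈ perIoc L ↔ y ∈ Ioc (-L) L := by
  have hpi := Real.pi_pos
  constructor
  · rintro ⟨n, hn⟩
    have h1 : n < 1 := by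
      by_contra! h
      have : (1 : ℝ) ≤ n := by exact_mod_cast h
      nlinarith [hn.1, hn.2, hy.1, hy.2]
    have h2 : -1 < n := by
      by_contra! h
      have : (n : ℝ) ≤ -1 := by exact_mod_cast h
      nlinarith [hn.1, hn.2, hy.1, hy.2]
    obtain rfl : n = 0 := by omega
    simpa using hn
  · exact fun h => ⟨0, by simpa using h⟩

/-- The integral of a `2π`-periodic `F` over the window of half-width `L` about `z`, written as an
integral over one fixed period, so that windows with different centres can be summed pointwise. -/
lemma integral_window_eq {F : ℝ → ℝ} (hper : Function.Periodic F (2 * π))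
    {L : ℝ} (hL0 : 0 ≤ L) (hL : L < π) (z : ℝ) :
    ∫ t in (-L)..L, F (z + t) =
      ∫ y in Ioc (-π) π, ({y | y - z ∈ perIoc L}).indicator F y := by
  have hpi := Real.pi_pos
  have hsub : Ioc (-L) L ⊆ Ioc (-π) π := Ioc_subset_Ioc (by linarith) hL.le
  set G := ({y | y - z ∈ perIoc L}).indicator F with hG
  have hGper : Function.Periodic G (2 * π) := by
    intro y
    have hiff : y + 2 * π ∈ {y | y - z ∈ perIoc L} ↔ y ∈ {y | y - z ∈ perIoc L} := by
      change y + 2 * π - z ∈ perIoc L ↔ y - z ∈ perIoc L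
      rw [show y + 2 * π - z = y - z + 2 * π by ring, add_two_pi_mem_perIoc]
    by_cases hy : y ∈ {y | y - z ∈ perIoc L}
    · rw [hG, indicator_of_mem hy, indicator_of_mem (hiff.2 hy), hper]
    · rw [hG, indicator_of_notMem hy, indicator_of_notMem (hiff.not.2 hy)]
  calc ∫ t in (-L)..L, F (z + t) = ∫ t in Ioc (-π) π, G (z + t) := by
        rw [intervalIntegral.integral_of_le (by linarith),
          setIntegral_eq_of_subset_of_forall_sdiff_eq_zero (f := fun t => G (z + t))
            measurableSet_Ioc hsub]
        · refine setIntegral_congr_fun measurableSet_Ioc fun t ht => ?_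
          have hmem : z + t ∈ {y | y - z ∈ perIoc L} := by
            change z + t - z ∈ perIoc L
            rw [add_sub_cancel_left]
            exact (mem_perIoc_iff hL (hsub ht)).2 ht
          simp only [hG, indicator_of_mem hmem]
        · intro t ht
          refine indicator_of_notMem (fun h => ht.2 ?_) _
          have h' : z + t - z ∈ perIoc L := h
          rw [add_sub_cancel_left] at h'
          exact (mem_perIoc_iff hL ht.1).1 h'
    _ = ∫ t in (-π)..(-π + 2 * π), G (z + t) := by
        rw [intervalIntegral.integral_of_le (by linarith)]
        congr 3; ring
    _ = ∫ t in (z + -π)..(z + -π) + 2 * π, G t := by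
        rw [intervalIntegral.integral_comp_add_left, add_assoc]
    _ = ∫ t in (-π)..(-π + 2 * π), G t := hGper.intervalIntegral_add_eq _ _
    _ = _ := by
        rw [intervalIntegral.integral_of_le (by linarith)]
        congr 3; ring

/-- A `δ`-separated family in a half-open interval of length `ℓ` has at most `⌈ℓ/δ⌉` members:
the half-open cells of length `δ`, counted from the left end, each contain at most one of them.
The `max` covers `ℓ < 0`. -/
lemma card_le_ceil_of_separated {ι : Type*} (J : Finset ι) (w : ι → ℝ) {b ℓ δ : ℝ} (hδ : 0 < δ)
    (hw : ∀ j ∈ J, w j ∈ Ico b (b + ℓ))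
    (hsep : ∀ i ∈ J, ∀ j ∈ J, i ≠ j → δ ≤ |w i - w j|) : (J.card : ℤ) ≤ max ⌈ℓ / δ⌉ 0 := by
  have hmaps : ∀ j ∈ J, ⌊(w j - b) / δ⌋ ∈ Finset.Ico 0 ⌈ℓ / δ⌉ := by
    intro j hj
    have := hw j hj
    rw [Finset.mem_Ico]
    refine ⟨Int.floor_nonneg.2 (div_nonneg (by linarith [this.1]) hδ.le), ?_⟩
    rw [Int.floor_lt]
    refine lt_of_lt_of_le ?_ (Int.le_ceil _)
    gcongr
    linarith [this.2]
  have hinj : Set.InjOn (fun j => ⌊(w j - b) / δ⌋) J := by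
    intro i hi j hj hij
    by_contra hne
    have h1 := Int.abs_sub_lt_one_of_floor_eq_floor hij
    rw [← sub_div, abs_div, abs_of_pos hδ, div_lt_one hδ] at h1
    have h2 := hsep i hi j hj hne
    rw [show w i - b - (w j - b) = w i - w j by ring] at h1
    linarith
  have := Finset.card_le_card_of_injOn _ hmaps hinj
  rw [Int.card_Ico, sub_zero] at this
  omega

lemma le_sub_of_lt {r : ℕ} {x : Fin r → ℝ} (hmono : StrictMono x) {δ : ℝ}
    (hsep : ∀ j : ℕ, ∀ h : j + 1 < r, δ ≤ x ⟨j + 1, h⟩ - x ⟨j, by omega⟩) {i j : Fin r}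
    (hij : i < j) : δ ≤ x j - x i := by
  have h1 : (i : ℕ) + 1 < r := by have := j.2; have : (i : ℕ) < j := hij; omega
  have h2 : x ⟨i + 1, h1⟩ ≤ x j := hmono.monotone (Fin.mk_le_of_le_val hij)
  have h3 := hsep i h1
  simp only [Fin.eta] at h3
  linarith

/-- Separation on the circle: distinct nodes stay `δ` apart modulo `2π`. A shift by a nonzero
multiple of `2π` is handled by the wrap-around gap. -/
lemma le_abs_sub_add_two_pi {r : ℕ} (hr : 1 < r) {x : Fin r → ℝ} (hmono : StrictMono x) {δ : ℝ}
    (hsep : ∀ j : ℕ, ∀ h : j + 1 < r, δ ≤ x ⟨j + 1, h⟩ - x ⟨j, by omega⟩)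
    (hwrap : δ ≤ 2 * π - (x ⟨r - 1, by omega⟩ - x ⟨0, by omega⟩))
    {i j : Fin r} (hij : i ≠ j) (n : ℤ) : δ ≤ |x i - x j + n * (2 * π)| := by
  have hpi := Real.pi_pos
  have hlo : ∀ k, x ⟨0, by omega⟩ ≤ x k := fun k =>
    hmono.monotone (Fin.mk_le_of_le_val (Nat.zero_le _))
  have hhi : ∀ k, x k ≤ x ⟨r - 1, by omega⟩ := fun k =>
    hmono.monotone (Fin.le_def.2 (by have := k.2; simp only; omega))
  have := hlo i; have := hlo j; have := hhi i; have := hhi j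
  rcases lt_trichotomy n 0 with hn | rfl | hn
  · have : (n : ℝ) ≤ -1 := by exact_mod_cast (by omega : n ≤ -1)
    exact le_abs.2 (Or.inr (by nlinarith))
  · rcases lt_or_gt_of_ne hij with h | h
    · exact le_abs.2 (Or.inr (by simpa using le_sub_of_lt hmono hsep h))
    · exact le_abs.2 (Or.inl (by simpa using le_sub_of_lt hmono hsep h))
  · have : (1 : ℝ) ≤ n := by exact_mod_cast hn
    exact le_abs.2 (Or.inl (by nlinarith))

/-- Equality holds, since `σ(δ;N) = ⌈π/(Nδ)⌉`; only this direction is needed. -/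
lemma ceil_le_sigmaDN (δ : ℝ) (N : ℕ) : (⌈π / (N * δ)⌉ : ℝ) ≤ sigmaDN δ N := by
  unfold sigmaDN
  split_ifs with h
  · obtain ⟨z, hz⟩ := h
    simp [hz]
  · rw [add_comm]
    exact_mod_cast Int.ceil_le_floor_add_one _

open Classical in
/-- Every point of the circle lies in at most `σ(δ;N)` of the windows of length `π/N` about
the nodes. -/
lemma card_window_le {r : ℕ} (hr : 1 < r) {x : Fin r → ℝ} (hmono : StrictMono x) {δ : ℝ}
    (hδ : 0 < δ) (hsep : ∀ j : ℕ, ∀ h : j + 1 < r, δ ≤ x ⟨j + 1, h⟩ - x ⟨j, by omega⟩)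
    (hwrap : δ ≤ 2 * π - (x ⟨r - 1, by omega⟩ - x ⟨0, by omega⟩))
    {N : ℕ} (hN : 0 < N) (a : ℝ) :
    ((Finset.univ.filter fun j => a - x j ∈ perIoc (π / (2 * N))).card : ℝ) ≤ sigmaDN δ N := by
  have hpi := Real.pi_pos
  have hN' : (0 : ℝ) < N := by exact_mod_cast hN
  set L := π / (2 * N) with hLdef
  have h2L : 2 * L / δ = π / (N * δ) := by rw [hLdef]; field_simp
  set J := Finset.univ.filter fun j => a - x j ∈ perIoc L with hJ
  have hex : ∀ j, ∃ n : ℤ, j ∈ J → a - x j + n * (2 * π) ∈ Ioc (-L) L := by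
    intro j
    by_cases h : j ∈ J
    · obtain ⟨n, hn⟩ := (Finset.mem_filter.1 h).2
      exact ⟨n, fun _ => hn⟩
    · exact ⟨0, fun h' => absurd h' h⟩
  choose n hn using hex
  have := card_le_ceil_of_separated J (fun j => x j - n j * (2 * π)) (b := a - L) (ℓ := 2 * L) hδ
    (fun j hj => by
      have := hn j hj
      constructor <;> linarith [this.1, this.2])
    (fun i _ j _ hij => by
      have := le_abs_sub_add_two_pi hr hmono hsep hwrap hij (n j - n i)
      convert this using 2
      push_cast; ring)
  rw [h2L, max_eq_left (Int.ceil_nonneg (by positivity))] at this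
  exact le_trans (by exact_mod_cast this) (ceil_le_sigmaDN δ N)

/-- The windows of length `π/N` about the nodes, all rotated by the same angle `θ`, cover each point
at most `σ(δ;N)` times. -/
lemma sum_integral_window_le {r : ℕ} (hr : 1 < r) {x : Fin r → ℝ} (hmono : StrictMono x) {δ : ℝ}
    (hδ : 0 < δ) (hsep : ∀ j : ℕ, ∀ h : j + 1 < r, δ ≤ x ⟨j + 1, h⟩ - x ⟨j, by omega⟩)
    (hwrap : δ ≤ 2 * π - (x ⟨r - 1, by omega⟩ - x ⟨0, by omega⟩))
    {N : ℕ} (hN : 0 < N) {F : ℝ → ℝ} (hF : Continuous F) (hF0 : ∀ y, 0 ≤ F y)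
    (hper : Function.Periodic F (2 * π)) (θ : ℝ) :
    ∑ j, ∫ t in (-(π / (2 * N)))..(π / (2 * N)), F (x j + θ + t) ≤
      sigmaDN δ N * ∫ y in Ioc (-π) π, F y := by
  classical
  have hpi := Real.pi_pos
  have hN1 : (1 : ℝ) ≤ N := by exact_mod_cast hN
  have hLπ : π / (2 * N) < π := div_lt_self hpi (by linarith)
  have hFi : IntegrableOn F (Ioc (-π) π) := hF.integrableOn_Ioc
  have hmeas : ∀ z : ℝ, MeasurableSet {y | y - z ∈ perIoc (π / (2 * N))} := fun z =>
    (measurableSet_perIoc _).preimage (by fun_prop : Measurable fun y : ℝ => y - z)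
  simp_rw [fun j => integral_window_eq hper (by positivity) hLπ (x j + θ)]
  rw [← integral_finsetSum _ fun j _ => hFi.indicator (hmeas _), ← integral_const_mul]
  refine integral_mono (integrable_finsetSum _ fun j _ => hFi.indicator (hmeas _))
    (hFi.const_mul _) fun y => ?_
  calc ∑ j, ({y | y - (x j + θ) ∈ perIoc (π / (2 * N))}).indicator F y
      = (Finset.univ.filter fun j => y - θ - x j ∈ perIoc (π / (2 * N))).card * F y := by
        rw [← nsmul_eq_mul, ← Finset.sum_const, Finset.sum_filter]
        refine Finset.sum_congr rfl fun j _ => ?_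
        have hiff : y ∈ {y | y - (x j + θ) ∈ perIoc (π / (2 * N))} ↔
            y - θ - x j ∈ perIoc (π / (2 * N)) := by
          rw [show y - θ - x j = y - (x j + θ) by ring]
          rfl
        simp only [indicator_apply, hiff]
    _ ≤ _ := mul_le_mul_of_nonneg_right (card_window_le hr hmono hδ hsep hwrap hN _) (hF0 y)

/-! ### Recovering `s` from its local averages, and the inequality -/

lemma integral_trigPoly_mul (N : ℕ) (c : ℤ → ℂ) {s : ℝ → ℂ}
    (hs : ∀ y : ℝ, s y = ∑ k ∈ Finset.Icc (-(N : ℤ)) (N : ℤ),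
      c k * Complex.exp (Complex.I * (k : ℂ) * (y : ℂ)))
    {u : ℝ → ℝ} (hc : Continuous u) (he : ∀ t, u (-t) = u t) (y : ℝ) :
    ∫ t in (-π)..π, s (y + t) * (u t : ℂ) = ∑ k ∈ Finset.Icc (-(N : ℤ)) (N : ℤ),
      c k * Complex.exp (Complex.I * (k : ℂ) * (y : ℂ)) * (cosT u k : ℂ) := by
  have h : ∀ t : ℝ, s (y + t) * (u t : ℂ) = ∑ k ∈ Finset.Icc (-(N : ℤ)) (N : ℤ),
      c k * Complex.exp (Complex.I * (k : ℂ) * (y : ℂ)) *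
        (Complex.exp (Complex.I * ((k : ℝ) : ℂ) * (t : ℂ)) * (u t : ℂ)) := by
    intro t
    rw [hs, Finset.sum_mul]
    refine Finset.sum_congr rfl fun k _ => ?_
    rw [Complex.ofReal_add, mul_add, Complex.exp_add, Complex.ofReal_intCast]
    ring
  simp only [h]
  rw [intervalIntegral.integral_finsetSum fun k _ => Continuous.intervalIntegrable (by fun_prop) _ _]
  refine Finset.sum_congr rfl fun k _ => ?_
  rw [intervalIntegral.integral_const_mul, integral_exp_mul_eq u hc he]

/-- A trigonometric polynomial of degree at most `N` is recovered from `s ⋆ u` by a finite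
combination of rotations of total mass `1 / û(N)`: the weights interpolate `1 / û`, which is convex
on `[-N, N]` because `û` is positive and concave there. -/
lemma exists_representation {N : ℕ} (hN : 0 < N) {u : ℝ → ℝ}
    (hc : Continuous u) (hnn : ∀ t, 0 ≤ u t) (he : ∀ t, u (-t) = u t) (hne : u ≠ 0)
    (hsu : Function.support u ⊆ Ioo (-(π / (2 * N))) (π / (2 * N)))
    (c : ℤ → ℂ) {s : ℝ → ℂ}
    (hs : ∀ y : ℝ, s y = ∑ k ∈ Finset.Icc (-(N : ℤ)) (N : ℤ),
      c k * Complex.exp (Complex.I * (k : ℂ) * (y : ℂ))) :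
    ∃ (ι : Type) (_ : Fintype ι) (w : ι → ℂ) (θ : ι → ℝ), ∑ m, ‖w m‖ = (cosT u N)⁻¹ ∧
      ∀ y, s y = ∑ m, w m * ∫ t in (-π)..π, s (y + θ m + t) * (u t : ℂ) := by
  have hcast : ∀ {k : ℤ}, |k| ≤ N → |(k : ℝ)| ≤ N := fun h => by exact_mod_cast h
  have hpos : ∀ k : ℤ, |k| ≤ N → 0 < cosT u k := fun k hk => cosT_pos hN hc hnn hne hsu (hcast hk)
  obtain ⟨ι, _, w, θ, hw, hθ⟩ := exists_interpolation hN (fun k : ℤ => (cosT u k)⁻¹)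
    (fun k => by push_cast; rw [cosT_neg])
    (fun k hk => inv_pos.2 (hpos k hk))
    (fun k hk => by
      have hk' := abs_lt.1 hk
      have h0 := hpos k hk.le
      have h1 := hpos (k + 1) (abs_le.2 ⟨by omega, by omega⟩)
      have h2 := hpos (k - 1) (abs_le.2 ⟨by omega, by omega⟩)
      have h3 := cosT_add_le hN hc hnn hsu (hcast hk.le)
      push_cast at h1 h2 ⊢
      set A := cosT u (k + 1)
      set B := cosT u (k - 1)
      set C := cosT u k
      -- harmonic mean ≤ arithmetic mean
      have hAB : 4 / (A + B) ≤ A⁻¹ + B⁻¹ := by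
        rw [inv_add_inv h1.ne' h2.ne', div_le_div_iff₀ (by positivity) (by positivity)]
        nlinarith [sq_nonneg (A - B)]
      have hC : 2 * C⁻¹ ≤ 4 / (A + B) := by
        rw [← div_eq_mul_inv, div_le_div_iff₀ h0 (by positivity)]
        linarith
      exact hC.trans hAB)
  refine ⟨ι, inferInstance, w, θ, by simpa using hw, fun y => ?_⟩
  simp only [integral_trigPoly_mul N c hs hc he, Finset.mul_sum]
  rw [Finset.sum_comm, hs]
  refine Finset.sum_congr rfl fun k hk => ?_
  have hk' : |k| ≤ N := abs_le.2 (Finset.mem_Icc.1 hk)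
  have h0 : (cosT u k : ℂ) ≠ 0 := by exact_mod_cast (hpos k hk').ne'
  have hθk := hθ k hk'
  push_cast at hθk
  calc _ = c k * Complex.exp (Complex.I * k * y) * (cosT u k : ℂ) *
        ∑ m, w m * Complex.exp (Complex.I * k * θ m) := by
        rw [hθk]; field_simp
    _ = _ := by
        rw [Finset.mul_sum]
        refine Finset.sum_congr rfl fun m _ => ?_
        rw [Complex.ofReal_add, mul_add, Complex.exp_add]
        ring

/-- Jensen's inequality for `|·|^p` and the probability weights `‖w m‖ / W`. -/
lemma rpow_norm_sum_mul_le {ι : Type*} [Fintype ι] {p : ℝ} (hp : 1 ≤ p) (w g : ι → ℂ) {W : ℝ}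
    (hW : 0 < W) (hw : ∑ m, ‖w m‖ = W) :
    ‖∑ m, w m * g m‖ ^ p ≤ W ^ p * ∑ m, ‖w m‖ / W * ‖g m‖ ^ p := by
  have h1 : ‖∑ m, w m * g m‖ ≤ W * ∑ m, ‖w m‖ / W * ‖g m‖ := by
    rw [Finset.mul_sum]
    refine (norm_sum_le _ _).trans (Finset.sum_le_sum fun m _ => ?_)
    rw [norm_mul]
    exact le_of_eq (by field_simp)
  have h2 := Real.rpow_arith_mean_le_arith_mean_rpow Finset.univ (fun m => ‖w m‖ / W)
    (fun m => ‖g m‖) (fun m _ => by positivity)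
    (by rw [← Finset.sum_div, hw, div_self hW.ne']) (fun m _ => norm_nonneg _) hp
  calc _ ≤ (W * ∑ m, ‖w m‖ / W * ‖g m‖) ^ p := by gcongr
    _ = W ^ p * (∑ m, ‖w m‖ / W * ‖g m‖) ^ p :=
        Real.mul_rpow hW.le (Finset.sum_nonneg fun m _ => by positivity)
    _ ≤ _ := by gcongr

theorem large_sieve_with_u
    (N : ℕ) (hN : 0 < N) (p : ℝ) (hp : 1 ≤ p) (q : ℝ≥0∞)
    (hpq : (ENNReal.ofReal p)⁻¹ + q⁻¹ = 1)
    (u : ℝ → ℝ)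
    (hu_cont : Continuous u) (hu_nonneg : ∀ t, 0 ≤ u t)
    (hu_even : ∀ t, u (-t) = u t) (hu_ne : u ≠ 0)
    (hu_supp : Function.support u ⊆ Icc (-(π / (2 * N))) (π / (2 * N)))
    (hu_norm : eLpNorm (fun t => u t) q (volume.restrict (Ioc (-π) π)) = 1)
    (r : ℕ) (hr : 1 < r) (x : Fin r → ℝ)
    (hmem : ∀ j, x j ∈ Ioc (-π) π) (hmono : StrictMono x)
    (δ : ℝ) (hδ : 0 < δ)
    (hsep : ∀ j : ℕ, ∀ h : j + 1 < r, δ ≤ x ⟨j + 1, h⟩ - x ⟨j, by omega⟩)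
    (hwrap : δ ≤ 2 * π - (x ⟨r - 1, by omega⟩ - x ⟨0, by omega⟩))
    (c : ℤ → ℂ) (s : ℝ → ℂ)
    (hs : ∀ y : ℝ, s y = ∑ k ∈ Finset.Icc (-(N : ℤ)) (N : ℤ),
      c k * Complex.exp (Complex.I * (k : ℂ) * (y : ℂ))) :
    ∑ j, ‖s (x j)‖ ^ p ≤
      sigmaDN δ N / ((fourierT u N).re) ^ p * ∫ y in Ioc (-π) π, ‖s y‖ ^ p := by
  have hpi := Real.pi_pos
  have hN1 : (1 : ℝ) ≤ N := by exact_mod_cast hN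
  have hLπ : π / (2 * N) ≤ π := div_le_self hpi.le (by linarith)
  have hsu := support_subset_Ioo hu_cont hu_supp
  have hpos : 0 < cosT u N := cosT_pos hN hu_cont hu_nonneg hu_ne hsu (by simp)
  have hre : (fourierT u N).re = cosT u N := by
    rw [fourierT_eq u hu_cont hu_even, Complex.ofReal_re]
  have hscont : Continuous s := by
    rw [funext hs]
    fun_prop
  have hsper : Function.Periodic s (2 * π) := by
    intro y
    rw [hs, hs]
    refine Finset.sum_congr rfl fun k _ => ?_
    congr 1
    rw [Complex.exp_eq_exp_iff_exists_int]
    exact ⟨k, by push_cast; ring⟩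
  set F : ℝ → ℝ := fun y => ‖s y‖ ^ p with hF
  have hFcont : Continuous F := hscont.norm.rpow_const fun _ => Or.inr (by linarith)
  have hF0 : ∀ y, 0 ≤ F y := fun y => by positivity
  have hFper : Function.Periodic F (2 * π) := fun y => by simp only [hF, hsper y]
  obtain ⟨ι, _, w, θ, hw, hrep⟩ :=
    exists_representation hN hu_cont hu_nonneg hu_even hu_ne hsu c hs
  set W := (cosT u N)⁻¹ with hWdef
  have hW : 0 < W := inv_pos.2 hpos
  have hpt : ∀ j, ‖s (x j)‖ ^ p ≤ W ^ p * ∑ m, ‖w m‖ / W *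
      ∫ t in (-(π / (2 * N)))..(π / (2 * N)), F (x j + θ m + t) := by
    intro j
    rw [hrep (x j)]
    refine (rpow_norm_sum_mul_le hp w _ hW hw).trans ?_
    gcongr with m _
    exact norm_integral_mul_rpow_le hp hpq hu_cont (by positivity) hLπ hsu hu_norm
      (f := fun t => s (x j + θ m + t)) (by fun_prop)
  calc ∑ j, ‖s (x j)‖ ^ p
      ≤ ∑ j, W ^ p * ∑ m, ‖w m‖ / W *
          ∫ t in (-(π / (2 * N)))..(π / (2 * N)), F (x j + θ m + t) :=
        Finset.sum_le_sum fun j _ => hpt j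
    _ = W ^ p * ∑ m, ‖w m‖ / W *
          ∑ j, ∫ t in (-(π / (2 * N)))..(π / (2 * N)), F (x j + θ m + t) := by
        rw [← Finset.mul_sum, Finset.sum_comm]
        simp only [Finset.mul_sum]
    _ ≤ W ^ p * ∑ m, ‖w m‖ / W * (sigmaDN δ N * ∫ y in Ioc (-π) π, F y) := by
        gcongr with m _
        exact sum_integral_window_le hr hmono hδ hsep hwrap hN hFcont hF0 hFper (θ m)
    _ = sigmaDN δ N / ((fourierT u N).re) ^ p * ∫ y in Ioc (-π) π, ‖s y‖ ^ p := by
        rw [← Finset.sum_mul, ← Finset.sum_div, hw, div_self hW.ne', hre, hWdef,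
          Real.inv_rpow hpos.le]
        ring
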